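/- Let Ω, U, λ, u be as in the setting, and let z₀ ∈ Ω be a nonisolated critical point of u, i.e. ∇u(z₀) = 0 and for every ε > 0 there exists w ≠ z₀ with ‖w − z₀‖ < ε and ∇u(w) = 0. Then z₀ is a semi-degenerate critical point: Δu(z₀) ≠ 0 (so the second derivative of u at z₀ is a nonzero symmetric bilinear form), while this second derivative is degenerate, i.e. there exists a nonzero vector v ∈ ℝ² such that D²u(z₀)(v, w) = 0 for every w ∈ ℝ². In particular, the Hessian of u at z₀ has rank exactly one. -/

import Mathlib

open Metric Set Filter Topology MeasureTheory

noncomputable section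

abbrev E2 := EuclideanSpace ℝ (Fin 2)

/-- The Laplacian of `u`: the sum of the two pure second partial derivatives. -/
def lap (u : E2 → ℝ) (z : E2) : ℝ :=
  ∑ i : Fin 2, iteratedFDeriv ℝ 2 u z (fun _ => EuclideanSpace.single i 1)


lemma alg_aux {k : ℕ} (A : ContinuousMultilinearMap ℝ (fun _ : Fin k => E2) ℝ)
    (b : Module.Basis (Fin 2) ℝ E2)
    (hk : 0 < k)
    (h1 : ∀ (m : Fin k → E2) (i : Fin k), (∀ j, j ≠ i → m j = b 0) → A m = 0)
    (h2 : ∀ (m m' : Fin k → E2) (i j : Fin k), i ≠ j → m i = b 1 → m j = b 1 →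
      m' i = b 0 → m' j = b 0 → (∀ l, l ≠ i → l ≠ j → m l = m' l) → A m + A m' = 0) :
    A = 0 := by
  have key : ∀ (N : ℕ) (s : Fin k → Fin 2),
      (Finset.univ.filter (fun i => s i = 1)).card = N → A (fun i => b (s i)) = 0 := by
    intro N
    induction N using Nat.strong_induction_on with
    | _ N ih =>
      intro s hs
      by_cases h : ∃ i j, i ≠ j ∧ s i = 1 ∧ s j = 1
      · obtain ⟨i, j, hij, hi, hj⟩ := h
        let s' : Fin k → Fin 2 := fun l => if l = i ∨ l = j then 0 else s l
        have e := h2 (fun l => b (s l)) (fun l => b (s' l)) i j hij (by simp [hi]) (by simp [hj])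
          (by simp [s']) (by simp [s']) (by intro l h1 h2; simp [s', h1, h2])
        have hlt : (Finset.univ.filter (fun i => s' i = 1)).card < N := by
          rw [← hs]
          apply Finset.card_lt_card
          rw [Finset.ssubset_iff_of_subset]
          · exact ⟨i, by simp [hi], by simp [s']⟩
          · intro l
            simp only [Finset.mem_filter, Finset.mem_univ, true_and, s']
            split_ifs <;> simp
        rw [ih _ hlt s' rfl, add_zero] at e
        exact e
      · push Not at h
        by_cases h' : ∃ i, s i = 1
        · obtain ⟨i, hi⟩ := h'
          refine h1 _ i fun j hj => ?_
          have := h i j hj.symm hi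
          have : s j = 0 := by omega
          simp [this]
        · push Not at h'
          refine h1 _ ⟨0, hk⟩ fun j hj => ?_
          have := h' j
          have : s j = 0 := by omega
          simp [this]
  apply ContinuousMultilinearMap.toMultilinearMap_injective
  refine Module.Basis.ext_multilinear (fun _ => b) fun s => ?_
  simpa using key _ s rfl

lemma exists_perm_pair {α : Type*} [DecidableEq α] (p l i j : α) (hpl : p ≠ l) (hij : i ≠ j) :
    ∃ t : Equiv.Perm α, t p = i ∧ t l = j := by
  refine ⟨Equiv.swap l j * Equiv.swap p (Equiv.swap l j i), by simp, ?_⟩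
  have : l ≠ Equiv.swap l j i := by
    intro h
    have := congrArg (Equiv.swap l j) h
    simp at this
    exact hij this.symm
  rw [Equiv.Perm.mul_apply, Equiv.swap_apply_of_ne_of_ne hpl.symm this]
  simp

lemma lap_eq (u : E2 → ℝ) (z : E2) : lap u z =
    fderiv ℝ (fderiv ℝ u) z (EuclideanSpace.single 0 1) (EuclideanSpace.single 0 1) +
    fderiv ℝ (fderiv ℝ u) z (EuclideanSpace.single 1 1) (EuclideanSpace.single 1 1) := by
  simp [lap, Fin.sum_univ_two, iteratedFDeriv_two_apply]

lemma trace_aux {u : E2 → ℝ} {z : E2} (hu : AnalyticAt ℝ u z) {lam : ℝ}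
    (heq : ∀ᶠ w in 𝓝 z, lap u w + lam * u w = 0) (n : ℕ)
    (h0 : iteratedFDeriv ℝ n u z = 0) (m : Fin n → E2) :
    iteratedFDeriv ℝ n (fderiv ℝ (fderiv ℝ u)) z m
        (EuclideanSpace.single 0 1) (EuclideanSpace.single 0 1) +
    iteratedFDeriv ℝ n (fderiv ℝ (fderiv ℝ u)) z m
        (EuclideanSpace.single 1 1) (EuclideanSpace.single 1 1) = 0 := by
  let ev : E2 → ((E2 →L[ℝ] E2 →L[ℝ] ℝ) →L[ℝ] ℝ) := fun v =>
    (ContinuousLinearMap.apply ℝ ℝ v).comp (ContinuousLinearMap.apply ℝ (E2 →L[ℝ] ℝ) v)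
  let L := ev (EuclideanSpace.single 0 1) + ev (EuclideanSpace.single 1 1)
  have hL : ∀ B, L B = B (EuclideanSpace.single 0 1) (EuclideanSpace.single 0 1) +
      B (EuclideanSpace.single 1 1) (EuclideanSpace.single 1 1) := fun B => by simp [L, ev]
  have hE : (L ∘ fderiv ℝ (fderiv ℝ u)) =ᶠ[𝓝 z] (((-lam) • ContinuousLinearMap.id ℝ ℝ : ℝ →L[ℝ] ℝ) ∘ u) := by
    filter_upwards [heq] with w hw
    rw [lap_eq] at hw
    simp only [Function.comp, hL]
    simp
    linarith
  have h2 : ContDiffAt ℝ n (fderiv ℝ (fderiv ℝ u)) z := hu.fderiv.fderiv.contDiffAt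
  have e := (hE.iteratedFDeriv ℝ n).eq_of_nhds
  rw [L.iteratedFDeriv_comp_left h2 le_rfl,
    ContinuousLinearMap.iteratedFDeriv_comp_left _ (hu.contDiffAt (n := n)) le_rfl, h0] at e
  have e' := congrArg (fun f => f m) e
  simp [hL] at e'
  exact e'

lemma limit_aux {F : Type*} [NormedAddCommGroup F] [NormedSpace ℝ F] [CompleteSpace F]
    {G : E2 → F} {z : E2} (hG : AnalyticAt ℝ G z) (h : ℕ → E2) (hh0 : ∀ i, h i ≠ 0)
    (hh : Tendsto h atTop (𝓝 0)) (hz : ∀ i, G (z + h i) = 0) (y : E2)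
    (hy : Tendsto (fun i => ‖h i‖⁻¹ • h i) atTop (𝓝 y)) (n : ℕ)
    (hn : ∀ j < n, iteratedFDeriv ℝ j G z = 0) :
    iteratedFDeriv ℝ n G z (fun _ => y) = 0 := by
  obtain ⟨q, hq⟩ := hG
  obtain ⟨r, hqr⟩ := hq
  have hfs : ∀ j v, (j.factorial : ℝ) • q j (fun _ => v) = iteratedFDeriv ℝ j G z (fun _ => v) := by
    intro j v
    rw [← hqr.factorial_smul v j, Nat.cast_smul_eq_nsmul]
  have hps : ∀ v, q.partialSum (n + 1) v = q n (fun _ => v) := by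
    intro v
    rw [FormalMultilinearSeries.partialSum, Finset.sum_range_succ, Finset.sum_eq_zero, zero_add]
    intro j hj
    have := hfs j v
    rw [hn j (Finset.mem_range.1 hj)] at this
    simpa [Nat.factorial_ne_zero] using this
  have hO := (hqr.hasFPowerSeriesAt.isBigO_sub_partialSum_pow (n + 1)).comp_tendsto hh
  obtain ⟨C, hC⟩ := hO.bound
  have hb : ∀ᶠ i in atTop, ‖q n (fun _ => ‖h i‖⁻¹ • h i)‖ ≤ C * ‖h i‖ := by
    filter_upwards [hC] with i hi
    simp only [Function.comp, hz, hps, zero_sub, norm_neg, norm_pow, norm_norm] at hi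
    have hp : 0 < ‖h i‖ := norm_pos_iff.2 (hh0 i)
    rw [(q n).map_smul_univ (fun _ => ‖h i‖⁻¹) (fun _ => h i)]
    simp only [Finset.prod_const, Finset.card_univ, Fintype.card_fin, norm_smul, norm_pow, norm_inv,
      norm_norm]
    rw [inv_pow, inv_mul_le_iff₀ (by positivity)]
    calc _ ≤ _ := hi
      _ = _ := by ring
  have t1 : Tendsto (fun i => q n (fun _ => ‖h i‖⁻¹ • h i)) atTop (𝓝 (q n (fun _ => y))) :=
    ((q n).cont.tendsto _).comp (tendsto_pi_nhds.2 fun _ => hy)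
  have t2 : Tendsto (fun i => C * ‖h i‖) atTop (𝓝 0) := by
    simpa using (hh.norm).const_mul C
  have t3 := squeeze_zero_norm' hb t2
  rw [← hfs, tendsto_nhds_unique t1 t3, smul_zero]

lemma direction_aux {u : E2 → ℝ} {z₀ : E2}
    (hnoniso : ∀ ε > 0, ∃ w, w ≠ z₀ ∧ ‖w - z₀‖ < ε ∧ gradient u w = 0) :
    ∃ (h : ℕ → E2) (y : E2), (∀ i, h i ≠ 0) ∧ Tendsto h atTop (𝓝 0) ∧
      (∀ i, fderiv ℝ u (z₀ + h i) = 0) ∧ ‖y‖ = 1 ∧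
      Tendsto (fun i => ‖h i‖⁻¹ • h i) atTop (𝓝 y) := by
  choose! w hw0 hw1 hw2 using hnoniso
  let g : ℕ → E2 := fun i => w (1 / ((i : ℝ) + 1)) - z₀
  have hpos : ∀ i : ℕ, (0 : ℝ) < 1 / ((i : ℝ) + 1) := fun i => by positivity
  have g0 : ∀ i, g i ≠ 0 := fun i => sub_ne_zero.2 (hw0 _ (hpos i))
  have gt : Tendsto g atTop (𝓝 0) :=
    squeeze_zero_norm (fun i => (hw1 _ (hpos i)).le) tendsto_one_div_add_atTop_nhds_zero_nat
  have gs : ∀ i, ‖g i‖⁻¹ • g i ∈ sphere (0 : E2) 1 := by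
    intro i
    have := norm_pos_iff.2 (g0 i)
    simp [norm_smul, this.ne']
  obtain ⟨y, hy, φ, hφ, hlim⟩ := (isCompact_sphere (0 : E2) 1).tendsto_subseq gs
  refine ⟨g ∘ φ, y, fun i => g0 _, gt.comp hφ.tendsto_atTop, fun i => ?_, by simpa using hy, hlim⟩
  have := hw2 _ (hpos (φ i))
  have e : z₀ + (g ∘ φ) i = w (1 / ((φ i : ℝ) + 1)) := by simp [g]
  rw [e]
  simpa [gradient] using this

lemma basis_aux (y : E2) (hy : ‖y‖ = 1) : ∃ b : Module.Basis (Fin 2) ℝ E2, b 0 = y ∧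
    ∀ B : E2 →L[ℝ] E2 →L[ℝ] ℝ, B (EuclideanSpace.single 0 1) (EuclideanSpace.single 0 1) +
      B (EuclideanSpace.single 1 1) (EuclideanSpace.single 1 1) = 0 →
      B (b 1) (b 1) + B (b 0) (b 0) = 0 := by
  have hy2 : y 0 ^ 2 + y 1 ^ 2 = 1 := by
    have := EuclideanSpace.norm_sq_eq y
    rw [hy] at this
    simpa [Fin.sum_univ_two] using this.symm
  let e0 : E2 := EuclideanSpace.single 0 1
  let e1 : E2 := EuclideanSpace.single 1 1
  let x : E2 := -y 1 • e0 + y 0 • e1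
  have hye : y = y 0 • e0 + y 1 • e1 := by
    ext i; fin_cases i <;> simp [e0, e1]
  have li : LinearIndependent ℝ ![y, x] := by
    rw [LinearIndependent.pair_iff]
    intro s t hst
    have a0 := congrArg (fun v : E2 => v 0) hst
    have a1 := congrArg (fun v : E2 => v 1) hst
    simp [x, e0, e1] at a0 a1
    constructor
    · linear_combination (-s) * hy2 + y 0 * a0 + y 1 * a1
    · linear_combination (-t) * hy2 - y 1 * a0 + y 0 * a1
  let b := basisOfLinearIndependentOfCardEqFinrank li (by simp)
  have b0 : b 0 = y := by simp [b]
  have b1 : b 1 = x := by simp [b]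
  refine ⟨b, b0, fun B hB => ?_⟩
  rw [b0, b1]
  change B e0 e0 + B e1 e1 = 0 at hB
  have c1 : B y y = y 0 ^ 2 * B e0 e0 + y 0 * y 1 * (B e0 e1 + B e1 e0) + y 1 ^ 2 * B e1 e1 := by
    conv_lhs => rw [hye]
    simp only [map_add, map_smul, ContinuousLinearMap.add_apply, ContinuousLinearMap.smul_apply,
      smul_eq_mul]
    ring
  have c2 : B x x = y 1 ^ 2 * B e0 e0 - y 0 * y 1 * (B e0 e1 + B e1 e0) + y 0 ^ 2 * B e1 e1 := by
    simp only [x, map_add, map_smul, ContinuousLinearMap.add_apply, ContinuousLinearMap.smul_apply,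
      smul_eq_mul]
    ring
  rw [c1, c2]
  linear_combination (y 0 ^ 2 + y 1 ^ 2) * hB

lemma succ_aux {u : E2 → ℝ} {z : E2} (hu : AnalyticAt ℝ u z) (y : E2) (n : ℕ)
    (h : iteratedFDeriv ℝ n (fderiv ℝ u) z (fun _ => y) = 0)
    (m : Fin (n + 1) → E2) (i : Fin (n + 1)) (hm : ∀ j, j ≠ i → m j = y) :
    iteratedFDeriv ℝ (n + 1) u z m = 0 := by
  rw [← ContDiffAt.iteratedFDeriv_comp_perm hu.contDiffAt m (Equiv.swap i (Fin.last n)),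
    iteratedFDeriv_succ_apply_right]
  have : Fin.init (m ∘ (Equiv.swap i (Fin.last n))) = fun _ => y := by
    funext j
    apply hm
    intro h
    have := congrArg (Equiv.swap i (Fin.last n)) h
    simp at this
  rw [this]
  change iteratedFDeriv ℝ n (fderiv ℝ u) z (fun _ => y) _ = 0
  rw [h]; simp

lemma step_aux {u : E2 → ℝ} {z : E2} (hu : AnalyticAt ℝ u z) {lam : ℝ}
    (heq : ∀ᶠ w in 𝓝 z, lap u w + lam * u w = 0) (y : E2) (hy : ‖y‖ = 1) (n : ℕ)
    (h0 : iteratedFDeriv ℝ n u z = 0)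
    (h : iteratedFDeriv ℝ (n + 1) (fderiv ℝ u) z (fun _ => y) = 0) :
    iteratedFDeriv ℝ (n + 2) u z = 0 := by
  obtain ⟨b, hb, hB⟩ := basis_aux y hy
  refine alg_aux _ b (by omega) (fun m i hm => succ_aux hu y (n + 1) h m i (by rwa [hb] at hm)) ?_
  intro m m' i j hij hi hj hi' hj' hmm
  obtain ⟨t, ht1, ht2⟩ := exists_perm_pair (Fin.castSucc (Fin.last n)) (Fin.last (n + 1)) i j
    (Fin.castSucc_lt_last _).ne hij
  have ex : ∀ M : Fin (n + 2) → E2, iteratedFDeriv ℝ (n + 2) u z M =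
      iteratedFDeriv ℝ n (fderiv ℝ (fderiv ℝ u)) z (Fin.init (Fin.init (M ∘ t))) (M i) (M j) := by
    intro M
    rw [← ContDiffAt.iteratedFDeriv_comp_perm hu.contDiffAt M t, iteratedFDeriv_succ_apply_right,
      iteratedFDeriv_succ_apply_right]
    simp [Fin.init, ht1, ht2]
  have hin : Fin.init (Fin.init (m ∘ t)) = Fin.init (Fin.init (m' ∘ t)) := by
    funext l
    simp only [Fin.init, Function.comp]
    apply hmm
    · rw [← ht1]; intro h; have := t.injective h
      exact (Fin.castSucc_lt_last l).ne (Fin.castSucc_injective _ this)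
    · rw [← ht2]; intro h; have := t.injective h
      exact (Fin.castSucc_lt_last _).ne this
  rw [ex, ex, hin, hi, hj, hi', hj']
  exact hB _ (trace_aux hu heq n h0 _)

/-- A nonisolated critical point `z₀` of the eigenfunction `u` is semi-degenerate:
`Δu(z₀) ≠ 0` while the second derivative of `u` at `z₀` is a degenerate bilinear form. -/
theorem nonisolated_critical_point_semidegenerate
    (Ω U : Set E2) (hΩne : Ω.Nonempty) (hΩo : IsOpen Ω)
    (hΩb : Bornology.IsBounded Ω)
    (hUo : IsOpen U) (hUconn : IsConnected U) (hsub : closure Ω ⊆ U)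
    (lam : ℝ) (hlam : 0 < lam)
    (u : E2 → ℝ) (hu : AnalyticOnNhd ℝ u U)
    (hne : ∃ z ∈ U, u z ≠ 0)
    (heq : ∀ z ∈ U, lap u z + lam * u z = 0)
    (z₀ : E2) (hz₀ : z₀ ∈ Ω) (hg0 : gradient u z₀ = 0)
    (hnoniso : ∀ ε > 0, ∃ w, w ≠ z₀ ∧ ‖w - z₀‖ < ε ∧ gradient u w = 0) :
    lap u z₀ ≠ 0 ∧
      ∃ v : E2, v ≠ 0 ∧ ∀ w : E2, iteratedFDeriv ℝ 2 u z₀ ![v, w] = 0 := by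
  have hzU : z₀ ∈ U := hsub (subset_closure hz₀)
  have hua := hu z₀ hzU
  have heq' : ∀ᶠ w in 𝓝 z₀, lap u w + lam * u w = 0 := by
    filter_upwards [hUo.mem_nhds hzU] with w hw using heq w hw
  obtain ⟨h, y, hh0, hh, hz, hy, hlim⟩ := direction_aux hnoniso
  have hlimit := limit_aux hua.fderiv h hh0 hh hz y hlim
  have hf0 : fderiv ℝ u z₀ = 0 := by simpa [gradient] using hg0
  constructor
  · intro hlap
    have hu0 : u z₀ = 0 := by
      have := heq z₀ hzU
      rw [hlap, zero_add] at this
      exact (mul_eq_zero.1 this).resolve_left hlam.ne'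
    have hall : ∀ n, iteratedFDeriv ℝ n u z₀ = 0 := by
      intro n
      induction n using Nat.strong_induction_on with
      | _ n ih =>
        match n, ih with
        | 0, _ => ext m; simp [hu0]
        | 1, _ => ext m; simp [hf0]
        | n + 2, ih =>
          refine step_aux hua heq' y hy n (ih n (by omega)) (hlimit (n + 1) ?_)
          intro j hj
          rw [← norm_eq_zero, norm_iteratedFDeriv_fderiv, ih (j + 1) (by omega), norm_zero]
    obtain ⟨q, r, hq⟩ := hua
    have hloc : u =ᶠ[𝓝 z₀] 0 := by
      have hb : Metric.eball z₀ r ∈ 𝓝 z₀ := Metric.eball_mem_nhds _ hq.r_pos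
      filter_upwards [hb] with w hw
      have hs := hq.hasSum_iteratedFDeriv (y := w - z₀) (by
        simpa [Metric.mem_eball, edist_eq_enorm_sub] using hw)
      simp only [hall] at hs
      simp at hs
      simpa using (hs.unique hasSum_zero)
    obtain ⟨z, hzU', hzne⟩ := hne
    exact hzne (hu.eqOn_zero_of_preconnected_of_eventuallyEq_zero hUconn.isPreconnected hzU hloc hzU')
  · refine ⟨y, by rintro rfl; simp at hy, fun w => ?_⟩
    refine succ_aux hua y 1 (hlimit 1 ?_) _ 1 ?_
    · intro j hj
      obtain rfl : j = 0 := by omega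
      ext m; simp [hf0]
    · intro j hj
      fin_cases j
      · simp
      · simp at hj
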